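/- (Lemma 3, square-summability) If α > L, then the sequence {Z^t} generated by the proximal network-slimming iteration satisfies, for every N ≥ 1, Σ_{t=1}^{N−1} ((α − L)/2)·‖Z^{t+1} − Z^t‖₂² ≤ F(Z^1) − F(Z^N) ≤ F(Z^1); consequently Σ_{t=1}^{∞} ‖Z^{t+1} − Z^t‖₂² ≤ (2/(α − L))·F(Z^1) < ∞. -/

import Mathlib

noncomputable section

/-- Concatenation `W̃ = (W, γ)` of `W ∈ ℝⁿ` and `γ ∈ ℝᶜ` into a single Euclidean vector. -/
def pairWγ {n c : ℕ} (W : EuclideanSpace ℝ (Fin n)) (γ : EuclideanSpace ℝ (Fin c)) :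
    EuclideanSpace ℝ (Fin n ⊕ Fin c) :=
  (EuclideanSpace.equiv (Fin n ⊕ Fin c) ℝ).symm (Sum.elim (fun i => W i) (fun j => γ j))

/-- Partial gradient `∇_W L̃(W, γ)`. -/
def gradW {n c : ℕ} (Lt : EuclideanSpace ℝ (Fin n ⊕ Fin c) → ℝ)
    (W : EuclideanSpace ℝ (Fin n)) (γ : EuclideanSpace ℝ (Fin c)) : EuclideanSpace ℝ (Fin n) :=
  (EuclideanSpace.equiv (Fin n) ℝ).symm (fun i => gradient Lt (pairWγ W γ) (Sum.inl i))

/-- Partial gradient `∇_γ L̃(W, γ)`. -/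
def gradG {n c : ℕ} (Lt : EuclideanSpace ℝ (Fin n ⊕ Fin c) → ℝ)
    (W : EuclideanSpace ℝ (Fin n)) (γ : EuclideanSpace ℝ (Fin c)) : EuclideanSpace ℝ (Fin c) :=
  (EuclideanSpace.equiv (Fin c) ℝ).symm (fun j => gradient Lt (pairWγ W γ) (Sum.inr j))

/-- Soft-thresholding operator `(S(x, τ))_i = sign(x_i) · max{0, |x_i| − τ}`. -/
def softThresh {c : ℕ} (x : EuclideanSpace ℝ (Fin c)) (τ : ℝ) : EuclideanSpace ℝ (Fin c) :=
  (EuclideanSpace.equiv (Fin c) ℝ).symm (fun i => Real.sign (x i) * max 0 (|x i| - τ))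

/-- The objective `F(W, γ, ξ) = L̃(W, γ) + λ‖ξ‖₁ + (β/2)‖γ − ξ‖₂²`. -/
def objF {n c : ℕ} (Lt : EuclideanSpace ℝ (Fin n ⊕ Fin c) → ℝ) (lam β : ℝ)
    (W : EuclideanSpace ℝ (Fin n)) (γ ξ : EuclideanSpace ℝ (Fin c)) : ℝ :=
  Lt (pairWγ W γ) + lam * (∑ i, |ξ i|) + β / 2 * ‖γ - ξ‖ ^ 2

/-!
With `κ = α - L / 2`, one iteration decreases `F` by at least `κ * ‖Z^{t+1} - Z^t‖²`. The `(W, γ)`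
update is a gradient step on `L̃` with an exact proximal treatment of the coupling
`(β / 2) ‖γ - ξ‖²`, so the descent lemma for `L̃` controls it. The `ξ` update is a proximal step for
`λ‖·‖₁`, controlled by the variational inequality of soft thresholding. The decrease telescopes, and
`0 ≤ F` bounds the sum.
-/

open scoped RealInnerProductSpace

section InnerProductSpace

variable {E : Type*} [NormedAddCommGroup E] [InnerProductSpace ℝ E]

theorem inner_sub_sub_eq_norm_sq (a b c : E) :
    ⟪a - b, a - c⟫ = (‖a - b‖ ^ 2 + ‖a - c‖ ^ 2 - ‖b - c‖ ^ 2) / 2 := by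
  have polarization := norm_sub_sq_real (a - c) (a - b)
  rw [sub_sub_sub_cancel_left, real_inner_comm] at polarization
  linarith

theorem hasDerivAt_comp_add_smul [CompleteSpace E] {f : E → ℝ} (hf : Differentiable ℝ f)
    (x d : E) (t : ℝ) :
    HasDerivAt (fun s : ℝ ↦ f (x + s • d)) ⟪gradient f (x + t • d), d⟫ t := by
  have hline : HasDerivAt (fun s : ℝ ↦ x + s • d) d t := by
    simpa using ((hasDerivAt_id t).smul_const d).const_add x
  rw [inner_gradient_left]
  exact (hf (x + t • d)).hasFDerivAt.comp_hasDerivAt t hline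

theorem le_add_inner_gradient_add_norm_sq [CompleteSpace E] {f : E → ℝ} {L : ℝ} {x : E}
    (hf : Differentiable ℝ f) (hLip : ∀ y, ‖gradient f y - gradient f x‖ ≤ L * ‖y - x‖) (y : E) :
    f y ≤ f x + ⟪gradient f x, y - x⟫ + L / 2 * ‖y - x‖ ^ 2 := by
  set d := y - x with hd
  set bound : ℝ → ℝ := fun t ↦ f x + t * ⟪gradient f x, d⟫ + L / 2 * ‖d‖ ^ 2 * t ^ 2 with hbound
  have hbound_deriv (t : ℝ) :
      HasDerivAt bound (⟪gradient f x, d⟫ + L * ‖d‖ ^ 2 * t) t := by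
    refine ((((hasDerivAt_id t).mul_const _).const_add _).add
      ((hasDerivAt_pow 2 t).const_mul _)).congr_deriv ?_
    push_cast
    ring
  have hderiv_le (t : ℝ) (ht : 0 ≤ t) :
      ⟪gradient f (x + t • d), d⟫ ≤ ⟪gradient f x, d⟫ + L * ‖d‖ ^ 2 * t := by
    rw [← sub_le_iff_le_add', ← inner_sub_left]
    calc ⟪gradient f (x + t • d) - gradient f x, d⟫
        ≤ ‖gradient f (x + t • d) - gradient f x‖ * ‖d‖ := real_inner_le_norm _ _
      _ ≤ L * ‖x + t • d - x‖ * ‖d‖ := by gcongr; exact hLip _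
      _ = L * ‖d‖ ^ 2 * t := by
        rw [add_sub_cancel_left, norm_smul, Real.norm_of_nonneg ht]
        ring
  have hle_bound : f (x + (1 : ℝ) • d) ≤ bound 1 :=
    image_le_of_deriv_right_le_deriv_boundary
      (fun t _ ↦ (hasDerivAt_comp_add_smul hf x d t).continuousAt.continuousWithinAt)
      (fun t _ ↦ (hasDerivAt_comp_add_smul hf x d t).hasDerivWithinAt)
      (by simp [hbound])
      (fun t _ ↦ (hbound_deriv t).continuousAt.continuousWithinAt)
      (fun t _ ↦ (hbound_deriv t).hasDerivWithinAt)
      (fun t ht ↦ hderiv_le t ht.1) (Set.right_mem_Icc.mpr zero_le_one)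
  simpa [hbound, hd] using hle_bound

end InnerProductSpace

section SoftThreshold

theorem sub_mul_sub_sign_mul_max_le {τ : ℝ} (hτ : 0 ≤ τ) (x y : ℝ) :
    (x - x.sign * max 0 (|x| - τ)) * (y - x.sign * max 0 (|x| - τ)) ≤
      τ * (|y| - |x.sign * max 0 (|x| - τ)|) := by
  rcases le_or_gt |x| τ with hx | hx
  · rw [max_eq_left (sub_nonpos.mpr hx)]
    simp only [mul_zero, sub_zero, abs_zero]
    calc x * y ≤ |x| * |y| := (le_abs_self _).trans_eq (abs_mul x y)
      _ ≤ τ * |y| := by gcongr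
  · rw [max_eq_right (sub_nonneg.mpr hx.le)]
    rcases lt_abs.mp hx with hpos | hneg
    · rw [Real.sign_of_pos (by linarith), abs_of_pos (a := x) (by linarith), one_mul,
        abs_of_pos (sub_pos.mpr hpos), sub_sub_cancel]
      gcongr
      exact le_abs_self y
    · rw [Real.sign_of_neg (by linarith), abs_of_neg (a := x) (by linarith), neg_one_mul, abs_neg,
        abs_of_pos (sub_pos.mpr hneg)]
      calc (x - -(-x - τ)) * (y - -(-x - τ)) = τ * (-y - (-x - τ)) := by ring
        _ ≤ τ * (|y| - (-x - τ)) := by gcongr; exact neg_le_abs y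

variable {c : ℕ}

-- The optimality condition `x - S(x, τ) ∈ τ ∂‖·‖₁(S(x, τ))`.
theorem inner_sub_softThresh_le {τ : ℝ} (hτ : 0 ≤ τ) (x y : EuclideanSpace ℝ (Fin c)) :
    ⟪x - softThresh x τ, y - softThresh x τ⟫ ≤
      τ * (∑ i, |y i| - ∑ i, |softThresh x τ i|) := by
  rw [PiLp.inner_apply, ← Finset.sum_sub_distrib, Finset.mul_sum]
  refine Finset.sum_le_sum fun i _ ↦ ?_
  simpa [mul_comm, softThresh] using sub_mul_sub_sign_mul_max_le hτ (x i) (y i)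

theorem softThresh_step_decrease {lam α β : ℝ} (hlam : 0 ≤ lam) (hαβ : 0 < α + β)
    {γ ξ ξ' : EuclideanSpace ℝ (Fin c)}
    (hξ : ξ' = softThresh ((1 / (α + β)) • (α • ξ + β • γ)) (lam / (α + β))) :
    lam * ∑ i, |ξ' i| + β / 2 * ‖γ - ξ'‖ ^ 2 + (α + β / 2) * ‖ξ' - ξ‖ ^ 2 ≤
      lam * ∑ i, |ξ i| + β / 2 * ‖γ - ξ‖ ^ 2 := by
  set u := (1 / (α + β)) • (α • ξ + β • γ) with hu
  have hresidual : (α + β) • (u - ξ') = -(α • (ξ' - ξ) + β • (ξ' - γ)) := by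
    rw [hu, smul_sub, smul_smul, mul_one_div_cancel hαβ.ne', one_smul]
    module
  have hvariational : ⟪(α + β) • (u - ξ'), ξ - ξ'⟫ ≤ lam * (∑ i, |ξ i| - ∑ i, |ξ' i|) := by
    have h := inner_sub_softThresh_le (div_nonneg hlam hαβ.le) u ξ
    rwa [← hξ, div_mul_eq_mul_div, le_div_iff₀' hαβ, ← real_inner_smul_left] at h
  have hinner : ⟪(α + β) • (u - ξ'), ξ - ξ'⟫ =
      α * ‖ξ' - ξ‖ ^ 2 + β * ⟪ξ' - γ, ξ' - ξ⟫ := by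
    rw [hresidual, ← neg_sub ξ' ξ, inner_neg_neg, inner_add_left, real_inner_smul_left,
      real_inner_smul_left, real_inner_self_eq_norm_sq]
  rw [hinner, inner_sub_sub_eq_norm_sq, norm_sub_rev ξ' γ] at hvariational
  linarith

end SoftThreshold

section SlimmingStep

variable {n c : ℕ}

theorem pairWγ_sub (W W' : EuclideanSpace ℝ (Fin n)) (γ γ' : EuclideanSpace ℝ (Fin c)) :
    pairWγ W γ - pairWγ W' γ' = pairWγ (W - W') (γ - γ') := by
  ext (i | j) <;> simp [pairWγ]

theorem inner_pairWγ (W W' : EuclideanSpace ℝ (Fin n)) (γ γ' : EuclideanSpace ℝ (Fin c)) :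
    ⟪pairWγ W γ, pairWγ W' γ'⟫ = ⟪W, W'⟫ + ⟪γ, γ'⟫ := by
  simp [pairWγ, PiLp.inner_apply, Fintype.sum_sum_type]

theorem norm_sq_pairWγ (W : EuclideanSpace ℝ (Fin n)) (γ : EuclideanSpace ℝ (Fin c)) :
    ‖pairWγ W γ‖ ^ 2 = ‖W‖ ^ 2 + ‖γ‖ ^ 2 := by
  simp only [← real_inner_self_eq_norm_sq, inner_pairWγ]

theorem gradient_pairWγ (Lt : EuclideanSpace ℝ (Fin n ⊕ Fin c) → ℝ)
    (W : EuclideanSpace ℝ (Fin n)) (γ : EuclideanSpace ℝ (Fin c)) :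
    gradient Lt (pairWγ W γ) = pairWγ (gradW Lt W γ) (gradG Lt W γ) := by
  ext (i | j) <;> simp [pairWγ, gradW, gradG]

variable {Lt : EuclideanSpace ℝ (Fin n ⊕ Fin c) → ℝ} {L lam α β : ℝ}
  {W W' : EuclideanSpace ℝ (Fin n)} {γ γ' ξ ξ' : EuclideanSpace ℝ (Fin c)}

theorem gradient_step_decrease (hα : α ≠ 0) (hαβ : α + β ≠ 0) (hdiff : Differentiable ℝ Lt)
    (hLip : ∀ x y, ‖gradient Lt x - gradient Lt y‖ ≤ L * ‖x - y‖)
    (hW : W' = W - (1 / α) • gradW Lt W γ)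
    (hγ : γ' = (1 / (α + β)) • (α • γ + β • ξ) - (1 / (α + β)) • gradG Lt W γ) :
    Lt (pairWγ W' γ') + β / 2 * ‖γ' - ξ‖ ^ 2 + (α - L / 2) * ‖W' - W‖ ^ 2 +
        (α - L / 2 + β / 2) * ‖γ' - γ‖ ^ 2 ≤
      Lt (pairWγ W γ) + β / 2 * ‖γ - ξ‖ ^ 2 := by
  have hgradW : gradW Lt W γ = -(α • (W' - W)) := by
    rw [hW, sub_sub_cancel_left, smul_neg, neg_neg, smul_smul, mul_one_div_cancel hα, one_smul]
  have hgradG : gradG Lt W γ = -(α • (γ' - γ) + β • (γ' - ξ)) := by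
    have hscaled : (α + β) • γ' = α • γ + β • ξ - gradG Lt W γ := by
      rw [hγ, ← smul_sub, smul_smul, mul_one_div_cancel hαβ, one_smul]
    rw [← sub_sub_cancel (α • γ + β • ξ) (gradG Lt W γ), ← hscaled]
    module
  have hinner : ⟪gradient Lt (pairWγ W γ), pairWγ W' γ' - pairWγ W γ⟫ =
      -(α * ‖W' - W‖ ^ 2 + α * ‖γ' - γ‖ ^ 2 + β * ⟪γ' - ξ, γ' - γ⟫) := by
    rw [gradient_pairWγ, pairWγ_sub, inner_pairWγ, hgradW, hgradG, inner_neg_left, inner_neg_left,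
      inner_add_left]
    simp only [real_inner_smul_left, real_inner_self_eq_norm_sq]
    ring
  have hdescent := le_add_inner_gradient_add_norm_sq hdiff (fun y ↦ hLip y (pairWγ W γ))
    (pairWγ W' γ')
  rw [hinner, inner_sub_sub_eq_norm_sq, pairWγ_sub, norm_sq_pairWγ, norm_sub_rev ξ γ] at hdescent
  linarith

theorem objF_step_decrease {κ : ℝ} (hL : 0 ≤ L) (hlam : 0 ≤ lam) (hα : 0 < α) (hβ : 0 ≤ β)
    (hκ : κ ≤ α - L / 2) (hdiff : Differentiable ℝ Lt)
    (hLip : ∀ x y, ‖gradient Lt x - gradient Lt y‖ ≤ L * ‖x - y‖)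
    (hW : W' = W - (1 / α) • gradW Lt W γ)
    (hγ : γ' = (1 / (α + β)) • (α • γ + β • ξ) - (1 / (α + β)) • gradG Lt W γ)
    (hξ : ξ' = softThresh ((1 / (α + β)) • (α • ξ + β • γ')) (lam / (α + β))) :
    κ * (‖W' - W‖ ^ 2 + ‖γ' - γ‖ ^ 2 + ‖ξ' - ξ‖ ^ 2) ≤
      objF Lt lam β W γ ξ - objF Lt lam β W' γ' ξ' := by
  have hαβ : 0 < α + β := by linarith
  have hsmooth := gradient_step_decrease hα.ne' hαβ.ne' hdiff hLip hW hγ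
  have hprox := softThresh_step_decrease hlam hαβ hξ
  calc κ * (‖W' - W‖ ^ 2 + ‖γ' - γ‖ ^ 2 + ‖ξ' - ξ‖ ^ 2)
      = κ * ‖W' - W‖ ^ 2 + κ * ‖γ' - γ‖ ^ 2 + κ * ‖ξ' - ξ‖ ^ 2 := by ring
    _ ≤ (α - L / 2) * ‖W' - W‖ ^ 2 + (α - L / 2 + β / 2) * ‖γ' - γ‖ ^ 2 +
        (α + β / 2) * ‖ξ' - ξ‖ ^ 2 := by gcongr <;> linarith
    _ ≤ objF Lt lam β W γ ξ - objF Lt lam β W' γ' ξ' := by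
      unfold objF
      linarith

theorem objF_nonneg (hlam : 0 ≤ lam) (hβ : 0 ≤ β) (hLt : 0 ≤ Lt (pairWγ W γ)) :
    0 ≤ objF Lt lam β W γ ξ := by
  unfold objF
  positivity

end SlimmingStep

section Telescoping

variable {a F : ℕ → ℝ} {κ : ℝ}

theorem sum_Ico_le_sub_of_le_sub_succ (hstep : ∀ t, a t ≤ F t - F (t + 1)) {m N : ℕ}
    (hmN : m ≤ N) : ∑ t ∈ Finset.Ico m N, a t ≤ F m - F N := by
  calc ∑ t ∈ Finset.Ico m N, a t ≤ ∑ t ∈ Finset.Ico m N, (F t - F (t + 1)) :=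
        Finset.sum_le_sum fun t _ ↦ hstep t
    _ = F m - F N := by
      simpa [neg_add_eq_sub] using Finset.sum_Ico_sub (fun t ↦ -F t) hmN

theorem summable_and_tsum_le_of_mul_le_sub_succ (hκ : 0 < κ) (ha : ∀ t, 0 ≤ a t)
    (hF : ∀ t, 0 ≤ F t) (hstep : ∀ t, κ * a t ≤ F t - F (t + 1)) :
    Summable a ∧ ∑' t, a t ≤ κ⁻¹ * F 0 := by
  have hpartial (N : ℕ) : ∑ t ∈ Finset.range N, a t ≤ κ⁻¹ * F 0 := by
    rw [le_inv_mul_iff₀ hκ, Finset.mul_sum, Finset.range_eq_Ico]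
    linarith [sum_Ico_le_sub_of_le_sub_succ hstep N.zero_le, hF N]
  exact ⟨summable_of_sum_range_le ha hpartial, Real.tsum_le_of_sum_range_le ha hpartial⟩

end Telescoping

theorem square_summability_general {n c : ℕ} {L lam α β κ : ℝ}
    (hL : 0 ≤ L) (hlam : 0 ≤ lam) (hβ : 0 ≤ β) (hκ : 0 < κ) (hκα : κ ≤ α - L / 2)
    {Lt : EuclideanSpace ℝ (Fin n ⊕ Fin c) → ℝ}
    (hdiff : Differentiable ℝ Lt)
    (hnonneg : ∀ x, 0 ≤ Lt x)
    (hLip : ∀ x y, ‖gradient Lt x - gradient Lt y‖ ≤ L * ‖x - y‖)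
    {W : ℕ → EuclideanSpace ℝ (Fin n)} {γ ξ : ℕ → EuclideanSpace ℝ (Fin c)}
    (hW : ∀ t, W (t + 1) = W t - (1 / α) • gradW Lt (W t) (γ t))
    (hγ : ∀ t, γ (t + 1) =
      (1 / (α + β)) • (α • γ t + β • ξ t) - (1 / (α + β)) • gradG Lt (W t) (γ t))
    (hξ : ∀ t, ξ (t + 1) =
      softThresh ((1 / (α + β)) • (α • ξ t + β • γ (t + 1))) (lam / (α + β))) :
    (∀ N : ℕ, 1 ≤ N →
      (∑ t ∈ Finset.Ico 1 N, κ *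
          (‖W (t + 1) - W t‖ ^ 2 + ‖γ (t + 1) - γ t‖ ^ 2 + ‖ξ (t + 1) - ξ t‖ ^ 2)) ≤
        objF Lt lam β (W 1) (γ 1) (ξ 1) - objF Lt lam β (W N) (γ N) (ξ N) ∧
      objF Lt lam β (W 1) (γ 1) (ξ 1) - objF Lt lam β (W N) (γ N) (ξ N) ≤
        objF Lt lam β (W 1) (γ 1) (ξ 1)) ∧
    Summable (fun t : ℕ =>
      ‖W (t + 2) - W (t + 1)‖ ^ 2 + ‖γ (t + 2) - γ (t + 1)‖ ^ 2 + ‖ξ (t + 2) - ξ (t + 1)‖ ^ 2) ∧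
    (∑' t : ℕ,
        (‖W (t + 2) - W (t + 1)‖ ^ 2 + ‖γ (t + 2) - γ (t + 1)‖ ^ 2 +
          ‖ξ (t + 2) - ξ (t + 1)‖ ^ 2)) ≤
      κ⁻¹ * objF Lt lam β (W 1) (γ 1) (ξ 1) := by
  have hα : 0 < α := by linarith
  set F : ℕ → ℝ := fun t ↦ objF Lt lam β (W t) (γ t) (ξ t)
  have hF (t : ℕ) : 0 ≤ F t := objF_nonneg hlam hβ (hnonneg _)
  have hstep (t : ℕ) : κ * (‖W (t + 1) - W t‖ ^ 2 + ‖γ (t + 1) - γ t‖ ^ 2 +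
      ‖ξ (t + 1) - ξ t‖ ^ 2) ≤ F t - F (t + 1) :=
    objF_step_decrease hL hlam hα hβ hκα hdiff hLip (hW t) (hγ t) (hξ t)
  refine ⟨fun N hN ↦ ⟨sum_Ico_le_sub_of_le_sub_succ hstep hN, sub_le_self _ (hF N)⟩, ?_⟩
  exact summable_and_tsum_le_of_mul_le_sub_succ (F := fun t ↦ F (t + 1)) hκ
    (fun t ↦ by positivity) (fun t ↦ hF (t + 1)) (fun t ↦ hstep (t + 1))

/-- (Lemma 3, square-summability.) -/
theorem square_summability
    (n c : ℕ) (hn : 0 < n) (hc : 0 < c)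
    (L lam α β : ℝ) (hL : 0 < L) (hlam : 0 < lam) (hα : 0 < α) (hβ : 0 < β)
    (hαL : L < α)
    (Lt : EuclideanSpace ℝ (Fin n ⊕ Fin c) → ℝ)
    (hdiff : Differentiable ℝ Lt)
    (hnonneg : ∀ x, 0 ≤ Lt x)
    (hLip : ∀ x y, ‖gradient Lt x - gradient Lt y‖ ≤ L * ‖x - y‖)
    (W : ℕ → EuclideanSpace ℝ (Fin n)) (γ ξ : ℕ → EuclideanSpace ℝ (Fin c))
    (hW : ∀ t, W (t + 1) = W t - (1 / α) • gradW Lt (W t) (γ t))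
    (hγ : ∀ t, γ (t + 1) =
      (1 / (α + β)) • (α • γ t + β • ξ t) - (1 / (α + β)) • gradG Lt (W t) (γ t))
    (hξ : ∀ t, ξ (t + 1) =
      softThresh ((1 / (α + β)) • (α • ξ t + β • γ (t + 1))) (lam / (α + β))) :
    (∀ N : ℕ, 1 ≤ N →
      (∑ t ∈ Finset.Ico 1 N, (α - L) / 2 *
          (‖W (t + 1) - W t‖ ^ 2 + ‖γ (t + 1) - γ t‖ ^ 2 + ‖ξ (t + 1) - ξ t‖ ^ 2)) ≤
        objF Lt lam β (W 1) (γ 1) (ξ 1) - objF Lt lam β (W N) (γ N) (ξ N) ∧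
      objF Lt lam β (W 1) (γ 1) (ξ 1) - objF Lt lam β (W N) (γ N) (ξ N) ≤
        objF Lt lam β (W 1) (γ 1) (ξ 1)) ∧
    Summable (fun t : ℕ =>
      ‖W (t + 2) - W (t + 1)‖ ^ 2 + ‖γ (t + 2) - γ (t + 1)‖ ^ 2 + ‖ξ (t + 2) - ξ (t + 1)‖ ^ 2) ∧
    (∑' t : ℕ,
        (‖W (t + 2) - W (t + 1)‖ ^ 2 + ‖γ (t + 2) - γ (t + 1)‖ ^ 2 +
          ‖ξ (t + 2) - ξ (t + 1)‖ ^ 2)) ≤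
      2 / (α - L) * objF Lt lam β (W 1) (γ 1) (ξ 1) := by
  simpa only [inv_div] using square_summability_general (κ := (α - L) / 2) hL.le hlam.le hβ.le
    (by linarith) (by linarith) hdiff hnonneg hLip hW hγ hξ
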